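/- One has (1/5)·∫₁^∞ t^{−3/5}(t−1)^{−4/5} dt = (1/5)·B(1/5, 2/5) = Γ(1/5)·Γ(2/5)²·√(10+2√5)/(20π), where B denotes the Euler Beta function and Γ the Gamma function; in particular the improper integral converges. -/

import Mathlib

open MeasureTheory

/-!
The substitution `t = x⁻¹` carries `∫₁^∞ t^{-(a+b)} (t - 1)^{b-1} dt` to Euler's integral
`∫₀¹ x^{a-1} (1 - x)^{b-1} dx = B(a, b)`. For `a = 2/5` and `b = 1/5` the denominator `Γ(a + b)` is
`Γ(1 - 2/5)`, so the reflection formula trades it for `Γ(2/5) sin(2π/5) / π`, and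
`sin(2π/5) = √(10 + 2√5) / 4`.
-/

open Set Real
open ProbabilityTheory (beta)

section InvSubstitution

variable {E : Type*} [NormedAddCommGroup E] [NormedSpace ℝ E] {c : ℝ}

lemma image_inv_Ioo_zero_inv (hc : 0 < c) : (·⁻¹) '' Ioo 0 c⁻¹ = Ioi c := by
  rw [image_inv_eq_inv, inv_Ioo_0_left (inv_pos.2 hc), inv_inv]

lemma integrableOn_Ioi_iff_integrableOn_Ioo_comp_inv (hc : 0 < c) (f : ℝ → E) :
    IntegrableOn f (Ioi c) ↔ IntegrableOn (fun x ↦ (x ^ 2)⁻¹ • f x⁻¹) (Ioo 0 c⁻¹) := by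
  rw [← image_inv_Ioo_zero_inv hc,
    integrableOn_image_iff_integrableOn_deriv_smul_of_antitoneOn measurableSet_Ioo
      (fun x hx ↦ hasDerivWithinAt_inv hx.1.ne' _) (antitoneOn_inv_pos.mono Ioo_subset_Ioi_self)]
  simp only [neg_neg]

lemma integral_Ioi_eq_integral_Ioo_comp_inv (hc : 0 < c) (f : ℝ → E) :
    ∫ t in Ioi c, f t = ∫ x in Ioo 0 c⁻¹, (x ^ 2)⁻¹ • f x⁻¹ := by
  rw [← image_inv_Ioo_zero_inv hc,
    integral_image_eq_integral_deriv_smul_of_antitoneOn measurableSet_Ioo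
      (fun x hx ↦ hasDerivWithinAt_inv hx.1.ne' _) (antitoneOn_inv_pos.mono Ioo_subset_Ioi_self)]
  simp only [neg_neg]

end InvSubstitution

lemma ofReal_cpow_mul_one_sub_cpow {x : ℝ} (hx : x ∈ Icc 0 1) (a b : ℝ) :
    (x : ℂ) ^ ((a : ℂ) - 1) * (1 - (x : ℂ)) ^ ((b : ℂ) - 1)
      = ((x ^ (a - 1) * (1 - x) ^ (b - 1) : ℝ) : ℂ) := by
  rw [Complex.ofReal_mul, Complex.ofReal_cpow hx.1, Complex.ofReal_cpow (sub_nonneg.2 hx.2)]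
  simp only [Complex.ofReal_sub, Complex.ofReal_one]

lemma integrableOn_Ioo_rpow_mul_one_sub_rpow {a b : ℝ} (ha : 0 < a) (hb : 0 < b) :
    IntegrableOn (fun x : ℝ ↦ x ^ (a - 1) * (1 - x) ^ (b - 1)) (Ioo 0 1) := by
  have h_complex := Complex.betaIntegral_convergent (u := a) (v := b) (by simpa) (by simpa)
  rw [intervalIntegrable_iff_integrableOn_Ioo_of_le zero_le_one] at h_complex
  exact (h_complex.congr_fun (fun x hx ↦ ofReal_cpow_mul_one_sub_cpow (Ioo_subset_Icc_self hx) a b)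
    measurableSet_Ioo).re

lemma integral_Ioo_rpow_mul_one_sub_rpow {a b : ℝ} (ha : 0 < a) (hb : 0 < b) :
    ∫ x in Ioo (0 : ℝ) 1, x ^ (a - 1) * (1 - x) ^ (b - 1) = beta a b := by
  rw [ProbabilityTheory.beta_eq_betaIntegralReal a b ha hb, Complex.betaIntegral,
    intervalIntegral.integral_of_le zero_le_one, integral_Ioc_eq_integral_Ioo,
    setIntegral_congr_fun measurableSet_Ioo fun x hx ↦
      ofReal_cpow_mul_one_sub_cpow (Ioo_subset_Icc_self hx) a b,
    integral_complex_ofReal, Complex.ofReal_re]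

lemma beta_comm (a b : ℝ) : beta a b = beta b a := by
  rw [beta, beta, mul_comm, add_comm]

lemma inv_sq_mul_inv_rpow_mul_inv_sub_one_rpow {x : ℝ} (hx : x ∈ Ioc 0 1) (a b : ℝ) :
    (x ^ 2)⁻¹ * (x⁻¹ ^ (-(a + b)) * (x⁻¹ - 1) ^ (b - 1)) = x ^ (a - 1) * (1 - x) ^ (b - 1) := by
  have h_sub : x⁻¹ - 1 = x⁻¹ * (1 - x) := by rw [mul_one_sub, inv_mul_cancel₀ hx.1.ne']
  have h_sq : (x ^ 2)⁻¹ = x ^ (-2 : ℝ) := by rw [rpow_neg hx.1.le, rpow_two]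
  have h_exp : -2 + (a + b) + -(b - 1) = a - 1 := by ring
  calc (x ^ 2)⁻¹ * (x⁻¹ ^ (-(a + b)) * (x⁻¹ - 1) ^ (b - 1))
      = x ^ (-2 : ℝ) * (x ^ (a + b) * (x ^ (-(b - 1)) * (1 - x) ^ (b - 1))) := by
        rw [h_sub, mul_rpow (inv_nonneg.2 hx.1.le) (sub_nonneg.2 hx.2),
          ← rpow_neg_eq_inv_rpow, ← rpow_neg_eq_inv_rpow, neg_neg, h_sq]
    _ = x ^ (a - 1) * (1 - x) ^ (b - 1) := by
        rw [← mul_assoc, ← mul_assoc, ← rpow_add hx.1, ← rpow_add hx.1, h_exp]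

lemma integrableOn_Ioi_one_rpow_mul_sub_one_rpow {a b : ℝ} (ha : 0 < a) (hb : 0 < b) :
    IntegrableOn (fun t : ℝ ↦ t ^ (-(a + b)) * (t - 1) ^ (b - 1)) (Ioi 1) := by
  rw [integrableOn_Ioi_iff_integrableOn_Ioo_comp_inv one_pos, inv_one]
  exact (integrableOn_Ioo_rpow_mul_one_sub_rpow ha hb).congr_fun
    (fun x hx ↦ (inv_sq_mul_inv_rpow_mul_inv_sub_one_rpow (Ioo_subset_Ioc_self hx) a b).symm)
    measurableSet_Ioo

lemma integral_Ioi_one_rpow_mul_sub_one_rpow {a b : ℝ} (ha : 0 < a) (hb : 0 < b) :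
    ∫ t in Ioi (1 : ℝ), t ^ (-(a + b)) * (t - 1) ^ (b - 1) = beta a b := by
  rw [integral_Ioi_eq_integral_Ioo_comp_inv one_pos, inv_one,
    ← integral_Ioo_rpow_mul_one_sub_rpow ha hb]
  exact setIntegral_congr_fun measurableSet_Ioo fun x hx ↦
    inv_sq_mul_inv_rpow_mul_inv_sub_one_rpow (Ioo_subset_Ioc_self hx) a b

lemma inv_Gamma_one_sub {s : ℝ} (hs : sin (π * s) ≠ 0) :
    (Gamma (1 - s))⁻¹ = Gamma s * sin (π * s) / π := by
  refine inv_eq_of_mul_eq_one_left ?_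
  calc Gamma s * sin (π * s) / π * Gamma (1 - s)
      = Gamma s * Gamma (1 - s) * sin (π * s) / π := by ring
    _ = 1 := by rw [Gamma_mul_Gamma_one_sub, div_mul_cancel₀ _ hs, div_self pi_ne_zero]

lemma cos_two_pi_div_five : cos (2 * π / 5) = (√5 - 1) / 4 := by
  rw [mul_div_assoc, cos_two_mul, cos_pi_div_five]
  linear_combination sq_sqrt (show (0 : ℝ) ≤ 5 by norm_num) / 8

lemma sin_two_pi_div_five : sin (2 * π / 5) = √(10 + 2 * √5) / 4 := by
  have h_nonneg : 0 ≤ sin (2 * π / 5) :=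
    sin_nonneg_of_nonneg_of_le_pi (by positivity) (by linarith [pi_pos])
  have h_sq : (4 * sin (2 * π / 5)) ^ 2 = 10 + 2 * √5 := by
    rw [mul_pow, sin_sq, cos_two_pi_div_five]
    linear_combination -sq_sqrt (show (0 : ℝ) ≤ 5 by norm_num)
  rw [← h_sq, sqrt_sq (by positivity), mul_div_cancel_left₀ _ four_ne_zero]

lemma beta_one_fifth_two_fifths :
    beta (1 / 5) (2 / 5) = Gamma (1 / 5) * Gamma (2 / 5) ^ 2 * √(10 + 2 * √5) / (4 * π) := by
  have h_sin : sin (π * (2 / 5)) = √(10 + 2 * √5) / 4 := by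
    rw [← sin_two_pi_div_five]
    ring_nf
  have h_sin_ne : sin (π * (2 / 5)) ≠ 0 := by
    rw [h_sin]
    positivity
  rw [beta, show (1 / 5 + 2 / 5 : ℝ) = 1 - 2 / 5 by norm_num, div_eq_mul_inv,
    inv_Gamma_one_sub h_sin_ne, h_sin]
  ring

/-- the improper integral `(1/5)·∫₁^∞ t^{-3/5}(t-1)^{-4/5} dt` converges and
equals `(1/5)·B(1/5, 2/5) = Γ(1/5)·Γ(2/5)²·√(10+2√5)/(20π)`, where
`B(a,b) = Γ(a)Γ(b)/Γ(a+b)` is the Euler Beta function. -/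
theorem alpha_at_one :
    IntegrableOn (fun t : ℝ => t ^ (-(3 : ℝ) / 5) * (t - 1) ^ (-(4 : ℝ) / 5)) (Set.Ioi 1) ∧
    (1 / 5) * ∫ t in Set.Ioi (1 : ℝ), t ^ (-(3 : ℝ) / 5) * (t - 1) ^ (-(4 : ℝ) / 5)
      = (1 / 5) * (Real.Gamma (1 / 5) * Real.Gamma (2 / 5) / Real.Gamma (1 / 5 + 2 / 5)) ∧
    (1 / 5) * (Real.Gamma (1 / 5) * Real.Gamma (2 / 5) / Real.Gamma (1 / 5 + 2 / 5))
      = Real.Gamma (1 / 5) * Real.Gamma (2 / 5) ^ 2 *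
          Real.sqrt (10 + 2 * Real.sqrt 5) / (20 * Real.pi) := by
  have h_two_fifths : (0 : ℝ) < 2 / 5 := by norm_num
  have h_one_fifth : (0 : ℝ) < 1 / 5 := by norm_num
  have h_exp_t : -(3 : ℝ) / 5 = -(2 / 5 + 1 / 5) := by norm_num
  have h_exp_sub : -(4 : ℝ) / 5 = 1 / 5 - 1 := by norm_num
  rw [← beta, h_exp_t, h_exp_sub]
  refine ⟨integrableOn_Ioi_one_rpow_mul_sub_one_rpow h_two_fifths h_one_fifth, ?_, ?_⟩
  · rw [integral_Ioi_one_rpow_mul_sub_one_rpow h_two_fifths h_one_fifth, beta_comm]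
  · rw [beta_one_fifth_two_fifths]
    ring
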